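/- Gaussian averages of monomials with an inverse-power radial weight: let m ≥ 1 and n ≥ 0 be natural numbers, let p be a real number with p < n + m/2, and let μ : {1,...,2n} → {1,...,m} be any assignment of indices. Then the function ξ ↦ e^{−‖ξ‖²}·‖ξ‖^{−2p}·∏_{j=1}^{2n} ξ_{μ(j)} is integrable on ℝ^m and ∫_{ℝ^m} e^{−‖ξ‖²}·‖ξ‖^{−2p}·∏_{j=1}^{2n} ξ_{μ(j)} dξ = π^{m/2} · (Γ(m/2 + n − p)/Γ(m/2 + n)) · (1/(2^{2n} n!)) · Σ_{σ ∈ S_{2n}} ∏_{j=1}^{n} δ_{μ(σ(2j−1)), μ(σ(2j))}, where S_{2n} is the symmetric group on 2n letters and δ is the Kronecker delta. (For p = 0 this gives the standard Gaussian moments ⟨ξ_{μ₁}···ξ_{μ_{2n}}⟩ = ((2n)!/(2^{2n} n!)) δ_{(μ₁μ₂}···δ_{μ_{2n−1}μ_{2n})}.) -/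

import Mathlib

open MeasureTheory

namespace NLT

/-- Inclusion–exclusion: an alternating sum over the sets `t` of letters, of the sums over the
self-maps avoiding `t`, leaves the sum over the permutations. -/
lemma sum_neg_one_pow_card_mul_sum_avoiding {ι : Type*} [Fintype ι] [DecidableEq ι]
    (F : (ι → ι) → ℝ) :
    ∑ t : Finset ι, (-1 : ℝ) ^ t.card *
        ∑ g : ι → ι, (∏ j, if g j ∈ t then (0 : ℝ) else 1) * F g
      = ∑ σ : Equiv.Perm ι, F σ := by
  have avoid (g : ι → ι) : ∑ t : Finset ι, (-1 : ℝ) ^ t.card *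
      ∏ j, (if g j ∈ t then (0 : ℝ) else 1) = if Function.Bijective g then 1 else 0 := by
    have hprod (t : Finset ι) : (∏ j, if g j ∈ t then (0 : ℝ) else 1)
        = if t ⊆ (Finset.univ.image g)ᶜ then 1 else 0 := by
      have hiff : (t ⊆ (Finset.univ.image g)ᶜ) ↔ ∀ j, g j ∉ t := by
        simp only [Finset.subset_iff, Finset.mem_compl, Finset.mem_image, Finset.mem_univ,
          true_and, not_exists]
        grind
      by_cases h : ∀ j, g j ∉ t
      · simp [hiff, h]
      · rw [if_neg (hiff.not.mpr h)]
        push Not at h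
        obtain ⟨j, hj⟩ := h
        exact Finset.prod_eq_zero (Finset.mem_univ j) (if_pos hj)
    have hpow := congrArg (Int.cast : ℤ → ℝ)
      (Finset.sum_powerset_neg_one_pow_card (x := (Finset.univ.image g)ᶜ))
    push_cast at hpow
    simp_rw [hprod, mul_ite, mul_one, mul_zero, ← Finset.sum_filter]
    rw [show (Finset.univ.filter fun t : Finset ι => t ⊆ (Finset.univ.image g)ᶜ)
      = ((Finset.univ.image g)ᶜ).powerset by ext; simp, hpow]
    have hsurj : (Finset.univ.image g)ᶜ = ∅ ↔ Function.Bijective g := by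
      rw [Finset.compl_eq_empty_iff, ← Finite.surjective_iff_bijective]
      simp [Finset.eq_univ_iff_forall, Function.Surjective]
    simp [hsurj]
  simp_rw [Finset.mul_sum]
  rw [Finset.sum_comm]
  simp_rw [← mul_assoc, ← Finset.sum_mul, avoid, ite_mul, one_mul, zero_mul]
  rw [← Finset.sum_filter]
  symm
  refine Finset.sum_bij (fun σ _ => (σ : ι → ι)) (fun σ _ => by simp)
    (fun σ _ τ _ h => DFunLike.coe_injective h)
    (fun g hg => ⟨Equiv.ofBijective g (Finset.mem_filter.mp hg).2, by simp, rfl⟩)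
    (fun _ _ => rfl)

/-- Polarization of the monomial `∏ j, a j`. -/
lemma sum_neg_one_pow_card_mul_sum_pow (N : ℕ) (a : Fin N → ℝ) :
    ∑ t : Finset (Fin N), (-1 : ℝ) ^ t.card * (∑ i, (if i ∈ t then (0 : ℝ) else 1) * a i) ^ N
      = N.factorial * ∏ j, a j := by
  simp_rw [Fintype.sum_pow, Finset.prod_mul_distrib]
  rw [sum_neg_one_pow_card_mul_sum_avoiding (fun g => ∏ j, a (g j))]
  simp [Equiv.prod_comp, Fintype.card_perm]

/-- The splitting of `2n` letters into `n` pairs of consecutive letters. -/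
def consecutivePairs (n : ℕ) : Fin n × Fin 2 ≃ Fin (2 * n) :=
  finProdFinEquiv.trans (finCongr (mul_comm n 2))

lemma consecutivePairs_zero {n : ℕ} (j : Fin n) (h : 2 * (j : ℕ) < 2 * n) :
    consecutivePairs n (j, 0) = ⟨2 * (j : ℕ), h⟩ := by
  ext; simp [consecutivePairs, finProdFinEquiv]

lemma consecutivePairs_one {n : ℕ} (j : Fin n) (h : 2 * (j : ℕ) + 1 < 2 * n) :
    consecutivePairs n (j, 1) = ⟨2 * (j : ℕ) + 1, h⟩ := by
  ext; simp [consecutivePairs, finProdFinEquiv, add_comm]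

/-- A power of a bilinear sum, expanded over maps from `2n` letters. -/
lemma sum_sum_pow_eq_sum_prod {κ : Type*} [Fintype κ] (n : ℕ) (D : κ → κ → ℝ) (w : κ → ℝ) :
    (∑ i, ∑ k, w i * w k * D i k) ^ n
      = ∑ g : Fin (2 * n) → κ, (∏ j, w (g j)) *
          ∏ j : Fin n, D (g (consecutivePairs n (j, 0))) (g (consecutivePairs n (j, 1))) := by
  let e := consecutivePairs n
  let E : (Fin (2 * n) → κ) ≃ (Fin n → κ × κ) :=
    (e.symm.arrowCongr (Equiv.refl κ)).trans ((Equiv.curry (Fin n) (Fin 2) κ).trans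
      ((Equiv.refl (Fin n)).arrowCongr (finTwoArrowEquiv κ)))
  have hE (g : Fin (2 * n) → κ) (j : Fin n) : E g j = (g (e (j, 0)), g (e (j, 1))) := rfl
  rw [← Fintype.sum_prod_type' (fun i k => w i * w k * D i k), Fintype.sum_pow, ← E.sum_comp]
  refine Finset.sum_congr rfl fun g _ => ?_
  simp_rw [hE, Finset.prod_mul_distrib (g := fun j => D _ _)]
  congr 1
  rw [← e.prod_comp, Fintype.prod_prod_type]
  simp

/-- One-dimensional Gaussian moments of even order. -/
lemma integral_exp_neg_sq_mul_pow (n : ℕ) :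
    ∫ x : ℝ, Real.exp (-x ^ 2) * x ^ (2 * n) = Real.Gamma (n + 1 / 2) := by
  have habs := integral_comp_abs (f := fun x : ℝ => Real.exp (-x ^ 2) * x ^ (2 * n))
  simp only [sq_abs, pow_mul] at habs ⊢
  rw [habs]
  have h := integral_rpow_mul_exp_neg_rpow (p := 2) (q := ((2 * n : ℕ) : ℝ)) two_pos
    (by have : (0 : ℝ) ≤ ((2 * n : ℕ) : ℝ) := Nat.cast_nonneg _
        linarith)
  simp only [Real.rpow_natCast, Real.rpow_two, pow_mul] at h
  simp_rw [mul_comm (Real.exp _)]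
  rw [h]
  push_cast
  rw [show (2 * (n : ℝ) + 1) / 2 = n + 1 / 2 by ring]
  ring

lemma Gamma_nat_add_half_eq_factorial (n : ℕ) :
    Real.Gamma (n + 1 / 2)
      = √Real.pi * ((2 * n).factorial / (2 ^ (2 * n) * n.factorial)) := by
  rw [Real.Gamma_nat_add_half]
  have h : ((2 * n).factorial : ℝ) = (2 * n - 1).doubleFactorial * (2 ^ n * n.factorial) := by
    cases n with
    | zero => simp
    | succ k =>
      have := Nat.factorial_eq_mul_doubleFactorial (2 * k + 1)
      have h2 := Nat.doubleFactorial_two_mul (k + 1)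
      rw [show 2 * (k + 1) = 2 * k + 1 + 1 by ring] at h2 ⊢
      rw [this, h2]
      push_cast
      ring
  rw [h]
  have := n.factorial_ne_zero
  field_simp
  ring

/-- Gaussian moments of a single coordinate. -/
lemma integral_exp_neg_norm_sq_mul_coord_pow (m n : ℕ) (i : Fin m) :
    ∫ ξ : EuclideanSpace ℝ (Fin m), Real.exp (-‖ξ‖ ^ 2) * ξ i ^ (2 * n)
      = Real.pi ^ ((m : ℝ) / 2) * ((2 * n).factorial / (2 ^ (2 * n) * n.factorial)) := by
  let f : Fin m → ℝ → ℝ := fun k x => Real.exp (-x ^ 2) * if k = i then x ^ (2 * n) else 1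
  have hf (ξ : EuclideanSpace ℝ (Fin m)) :
      Real.exp (-‖ξ‖ ^ 2) * ξ i ^ (2 * n) = ∏ k, f k (ξ k) := by
    simp only [f, Finset.prod_mul_distrib, ← Real.exp_sum, EuclideanSpace.real_norm_sq_eq,
      Finset.sum_neg_distrib]
    simp
  simp_rw [hf]
  rw [(PiLp.volume_preserving_ofLp (Fin m)).integral_comp
    (MeasurableEquiv.toLp 2 (Fin m → ℝ)).symm.measurableEmbedding (fun x => ∏ k, f k (x k)),
    integral_fintype_prod_volume_eq_prod]
  have hk (k : Fin m) : ∫ x, f k x = √Real.pi *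
      if k = i then ((2 * n).factorial / (2 ^ (2 * n) * n.factorial) : ℝ) else 1 := by
    by_cases h : k = i
    · simp only [f, h, if_true]
      rw [integral_exp_neg_sq_mul_pow, Gamma_nat_add_half_eq_factorial]
    · simpa [f, h] using integral_gaussian 1
  simp_rw [hk, Finset.prod_mul_distrib]
  simp only [Finset.prod_const, Finset.card_univ, Fintype.card_fin, Finset.prod_ite_eq',
    Finset.mem_univ, if_true]
  rw [Real.sqrt_eq_rpow, ← Real.rpow_natCast, ← Real.rpow_mul Real.pi_pos.le]
  ring_nf

/-- Gaussian moments of a linear form. -/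
lemma integral_exp_neg_norm_sq_mul_inner_pow (m n : ℕ) (hm : 1 ≤ m)
    (v : EuclideanSpace ℝ (Fin m)) :
    ∫ ξ : EuclideanSpace ℝ (Fin m), Real.exp (-‖ξ‖ ^ 2) * inner ℝ v ξ ^ (2 * n)
      = Real.pi ^ ((m : ℝ) / 2) * ((2 * n).factorial / (2 ^ (2 * n) * n.factorial))
        * (‖v‖ ^ 2) ^ n := by
  let i : Fin m := ⟨0, hm⟩
  obtain ⟨b, hb⟩ : ∃ b : OrthonormalBasis (Fin m) ℝ (EuclideanSpace ℝ (Fin m)),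
      v = ‖v‖ • b i := by
    by_cases hv : v = 0
    · exact ⟨EuclideanSpace.basisFun _ ℝ, by simp [hv]⟩
    have hu : ‖‖v‖⁻¹ • v‖ = 1 := by simp [norm_smul, hv]
    obtain ⟨b, hb⟩ := Orthonormal.exists_orthonormalBasis_extension_of_card_eq (𝕜 := ℝ)
      (E := EuclideanSpace ℝ (Fin m)) (ι := Fin m) (by simp) (v := fun _ => ‖v‖⁻¹ • v)
      (s := {i}) (by
        rw [orthonormal_iff_ite]
        rintro ⟨a, rfl⟩ ⟨b, rfl⟩
        simp [hu])
    exact ⟨b, by rw [hb i rfl]; simp [smul_smul, hv]⟩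
  have hinner (ξ : EuclideanSpace ℝ (Fin m)) : inner ℝ v ξ = ‖v‖ * b.repr ξ i := by
    rw [b.repr_apply_apply]
    conv_lhs => rw [hb]
    rw [real_inner_smul_left]
  have hrepr (ξ : EuclideanSpace ℝ (Fin m)) :
      Real.exp (-‖ξ‖ ^ 2) * inner ℝ v ξ ^ (2 * n)
        = (‖v‖ ^ 2) ^ n * (Real.exp (-‖b.repr ξ‖ ^ 2) * b.repr ξ i ^ (2 * n)) := by
    rw [hinner, b.repr.norm_map, mul_pow, pow_mul ‖v‖]
    ring
  simp_rw [hrepr]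
  rw [integral_const_mul, b.measurePreserving_repr.integral_comp
    b.measurableEquiv.measurableEmbedding
    (fun η : EuclideanSpace ℝ (Fin m) => Real.exp (-‖η‖ ^ 2) * η i ^ (2 * n)),
    integral_exp_neg_norm_sq_mul_coord_pow, mul_comm]

/-- Integrals of a homogeneous function against a radial weight, in polar coordinates. -/
lemma integral_radial_mul_homogeneous {E : Type*} [NormedAddCommGroup E] [NormedSpace ℝ E]
    [MeasurableSpace E] [BorelSpace E] [FiniteDimensional ℝ E] [Nontrivial E]
    (ν : Measure E) [ν.IsAddHaarMeasure] (k : ℕ) (g : ℝ → ℝ) (P : E → ℝ)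
    (hP : ∀ (r : ℝ) (x : E), P (r • x) = r ^ k * P x) :
    ∫ x, g ‖x‖ * P x ∂ν = (∫ x : Metric.sphere (0 : E) 1, P x ∂ν.toSphere) *
      ∫ r in Set.Ioi (0 : ℝ), r ^ (Module.finrank ℝ E - 1) * (g r * r ^ k) := by
  calc
    ∫ x, g ‖x‖ * P x ∂ν = ∫ x : ({(0)}ᶜ : Set E), g ‖x.1‖ * P x.1 ∂(ν.comap (↑)) := by
      rw [integral_subtype_comap (measurableSet_singleton _).compl fun x ↦ g ‖x‖ * P x,
        restrict_compl_singleton]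
    _ = ∫ z, P z.1 * (g z.2 * (z.2 : ℝ) ^ k)
          ∂ν.toSphere.prod (.volumeIoiPow (Module.finrank ℝ E - 1)) := by
      rw [← ν.measurePreserving_homeomorphUnitSphereProd.integral_comp
        (Homeomorph.measurableEmbedding _)]
      refine integral_congr_ae (.of_forall fun x => ?_)
      have hx : ‖x.1‖ ≠ 0 := norm_ne_zero_iff.mpr x.2
      have : x.1 = ‖x.1‖ • (‖x.1‖⁻¹ • x.1) := by rw [smul_inv_smul₀ hx]
      simp only [homeomorphUnitSphereProd_apply_snd_coe, homeomorphUnitSphereProd_apply_fst_coe]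
      conv_lhs => rw [this, hP, ← this]
      ring
    _ = _ := by
      rw [integral_prod_mul (fun z : Metric.sphere (0 : E) 1 => P z)
        (fun r : Set.Ioi (0 : ℝ) => g r * (r : ℝ) ^ k)]
      congr 1
      simp only [Measure.volumeIoiPow, ENNReal.ofReal]
      rw [integral_withDensity_eq_integral_smul,
        integral_subtype_comap measurableSet_Ioi fun a ↦
          Real.toNNReal (a ^ (Module.finrank ℝ E - 1)) • (g a * a ^ k),
        setIntegral_congr_fun measurableSet_Ioi fun x hx ↦ ?_]
      · rw [NNReal.smul_def, Real.coe_toNNReal _ (pow_nonneg hx.out.le _), smul_eq_mul]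
      · exact (measurable_subtype_coe.pow_const _).real_toNNReal

lemma radial_integrand_eq {r : ℝ} (hr : 0 < r) (m n : ℕ) (hm : 1 ≤ m) (p : ℝ) :
    r ^ (m - 1) * (Real.exp (-r ^ 2) * r ^ (-(2 * p)) * r ^ (2 * n))
      = r ^ ((m : ℝ) - 1 + 2 * n - 2 * p) * Real.exp (-r ^ (2 : ℝ)) := by
  rw [Real.rpow_two, ← Real.rpow_natCast r (m - 1), ← Real.rpow_natCast r (2 * n),
    show (m : ℝ) - 1 + 2 * n - 2 * p = ((m - 1 : ℕ) : ℝ) + -(2 * p) + ((2 * n : ℕ) : ℝ) by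
      push_cast [hm]; ring, Real.rpow_add hr, Real.rpow_add hr]
  ring

lemma integral_radial (m n : ℕ) (hm : 1 ≤ m) (p : ℝ) (hp : p < (n : ℝ) + (m : ℝ) / 2) :
    ∫ r in Set.Ioi (0 : ℝ), r ^ (m - 1) * (Real.exp (-r ^ 2) * r ^ (-(2 * p)) * r ^ (2 * n))
      = 1 / 2 * Real.Gamma ((m : ℝ) / 2 + n - p) := by
  rw [setIntegral_congr_fun measurableSet_Ioi fun r hr => radial_integrand_eq hr m n hm p,
    integral_rpow_mul_exp_neg_rpow two_pos (by linarith)]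
  congr 2
  ring

lemma integrable_exp_neg_norm_sq_mul_rpow_mul_monomial (m n : ℕ) (hm : 1 ≤ m) (p : ℝ)
    (hp : p < (n : ℝ) + (m : ℝ) / 2) (μ : Fin (2 * n) → Fin m) :
    Integrable (fun ξ : EuclideanSpace ℝ (Fin m) =>
      Real.exp (-‖ξ‖ ^ 2) * ‖ξ‖ ^ (-(2 * p)) * ∏ j : Fin (2 * n), ξ (μ j)) := by
  have : Nonempty (Fin m) := ⟨⟨0, hm⟩⟩
  have hint : Integrable (fun ξ : EuclideanSpace ℝ (Fin m) =>
      Real.exp (-‖ξ‖ ^ 2) * ‖ξ‖ ^ (-(2 * p)) * ‖ξ‖ ^ (2 * n)) := by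
    refine (integrable_fun_norm_addHaar volume
      (f := fun r : ℝ => Real.exp (-r ^ 2) * r ^ (-(2 * p)) * r ^ (2 * n))).mpr ?_
    simp only [finrank_euclideanSpace, Fintype.card_fin, smul_eq_mul]
    exact (integrableOn_rpow_mul_exp_neg_rpow (by linarith) two_pos).congr_fun
      (fun r hr => (radial_integrand_eq hr m n hm p).symm) measurableSet_Ioi
  refine hint.mono' (Measurable.aestronglyMeasurable (by fun_prop)) (.of_forall fun ξ => ?_)
  rw [norm_mul, Real.norm_of_nonneg (by positivity), norm_prod]
  gcongr
  calc ∏ j, ‖ξ (μ j)‖ ≤ ∏ _j : Fin (2 * n), ‖ξ‖ :=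
        Finset.prod_le_prod (fun _ _ => norm_nonneg _) fun j _ => PiLp.norm_apply_le ξ (μ j)
    _ = ‖ξ‖ ^ (2 * n) := by simp

/-- Gaussian moments (Wick's formula), as a sum over all permutations. -/
lemma integral_exp_neg_norm_sq_mul_monomial (m n : ℕ) (hm : 1 ≤ m) (μ : Fin (2 * n) → Fin m) :
    ∫ ξ : EuclideanSpace ℝ (Fin m), Real.exp (-‖ξ‖ ^ 2) * ∏ j : Fin (2 * n), ξ (μ j)
      = Real.pi ^ ((m : ℝ) / 2) * (1 / (2 ^ (2 * n) * (Nat.factorial n : ℝ)))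
        * ∑ σ : Equiv.Perm (Fin (2 * n)), ∏ j : Fin n,
            (if μ (σ (consecutivePairs n (j, 0)))
                = μ (σ (consecutivePairs n (j, 1)))
              then (1 : ℝ) else 0) := by
  let w (t : Finset (Fin (2 * n))) (i : Fin (2 * n)) : ℝ := if i ∈ t then 0 else 1
  let v (t : Finset (Fin (2 * n))) : EuclideanSpace ℝ (Fin m) :=
    ∑ i, w t i • EuclideanSpace.single (μ i) 1
  have hinner (t) (ξ : EuclideanSpace ℝ (Fin m)) : inner ℝ (v t) ξ = ∑ i, w t i * ξ (μ i) := by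
    simp [v, sum_inner, real_inner_smul_left, EuclideanSpace.inner_single_left]
  have hnorm (t) : ‖v t‖ ^ 2 = ∑ i, ∑ k, w t i * w t k * if μ i = μ k then 1 else 0 := by
    rw [← real_inner_self_eq_norm_sq, hinner]
    refine Finset.sum_congr rfl fun i _ => ?_
    simp [v, Finset.mul_sum, Pi.single_apply]
  have hint (t) : Integrable (fun ξ : EuclideanSpace ℝ (Fin m) =>
      (-1 : ℝ) ^ t.card * (Real.exp (-‖ξ‖ ^ 2) * inner ℝ (v t) ξ ^ (2 * n))) := by
    refine Integrable.const_mul ?_ _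
    simp_rw [hinner, Fintype.sum_pow, Finset.prod_mul_distrib, Finset.mul_sum]
    refine integrable_finsetSum _ fun g _ => ?_
    have := (integrable_exp_neg_norm_sq_mul_rpow_mul_monomial m n hm 0 (by positivity)
      (fun j => μ (g j))).const_mul (∏ j, w t (g j))
    simpa [mul_left_comm] using this
  have hpolar : ((2 * n).factorial : ℝ) *
      ∫ ξ : EuclideanSpace ℝ (Fin m), Real.exp (-‖ξ‖ ^ 2) * ∏ j : Fin (2 * n), ξ (μ j)
      = ∑ t : Finset (Fin (2 * n)), (-1 : ℝ) ^ t.card *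
        ∫ ξ : EuclideanSpace ℝ (Fin m), Real.exp (-‖ξ‖ ^ 2) * inner ℝ (v t) ξ ^ (2 * n) := by
    simp_rw [← integral_const_mul]
    rw [← integral_finsetSum _ fun t _ => hint t]
    refine integral_congr_ae (.of_forall fun ξ => ?_)
    simp only [hinner, mul_left_comm _ (Real.exp _), ← Finset.mul_sum]
    rw [← sum_neg_one_pow_card_mul_sum_pow (2 * n) (fun j => ξ (μ j))]
  simp_rw [integral_exp_neg_norm_sq_mul_inner_pow m n hm, hnorm,
    sum_sum_pow_eq_sum_prod n (fun i k => if μ i = μ k then (1 : ℝ) else 0),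
    mul_left_comm _ (Real.pi ^ ((m : ℝ) / 2) * _), ← Finset.mul_sum] at hpolar
  rw [sum_neg_one_pow_card_mul_sum_avoiding (fun g => ∏ j : Fin n,
    if μ (g (consecutivePairs n (j, 0)))
      = μ (g (consecutivePairs n (j, 1))) then (1 : ℝ) else 0)] at hpolar
  have hfac : ((2 * n).factorial : ℝ) ≠ 0 := by positivity
  apply mul_left_cancel₀ hfac
  rw [hpolar]
  ring

/-- Gaussian averages of monomials with an inverse-power radial weight: for `p < n + m/2`,
`∫_{ℝ^m} e^{−‖ξ‖²} ‖ξ‖^{−2p} ξ_{μ₁}⋯ξ_{μ_{2n}} dξ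
  = π^{m/2} (Γ(m/2+n−p)/Γ(m/2+n)) (1/(2^{2n} n!)) ∑_{σ ∈ S_{2n}} ∏ⱼ δ_{μ_{σ(2j−1)} μ_{σ(2j)}}`. -/
theorem gaussian_moments (m n : ℕ) (hm : 1 ≤ m) (p : ℝ) (hp : p < (n : ℝ) + (m : ℝ) / 2)
    (μ : Fin (2 * n) → Fin m) :
    Integrable (fun ξ : EuclideanSpace ℝ (Fin m) =>
      Real.exp (-‖ξ‖ ^ 2) * ‖ξ‖ ^ (-(2 * p)) * ∏ j : Fin (2 * n), ξ (μ j)) ∧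
    ∫ ξ : EuclideanSpace ℝ (Fin m),
        Real.exp (-‖ξ‖ ^ 2) * ‖ξ‖ ^ (-(2 * p)) * ∏ j : Fin (2 * n), ξ (μ j)
      = Real.pi ^ ((m : ℝ) / 2)
        * (Real.Gamma ((m : ℝ) / 2 + n - p) / Real.Gamma ((m : ℝ) / 2 + n))
        * (1 / (2 ^ (2 * n) * (Nat.factorial n : ℝ)))
        * ∑ σ : Equiv.Perm (Fin (2 * n)), ∏ j : Fin n,
            (if μ (σ ⟨2 * (j : ℕ), by have := j.isLt; omega⟩)
                = μ (σ ⟨2 * (j : ℕ) + 1, by have := j.isLt; omega⟩)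
              then (1 : ℝ) else 0) := by
  refine ⟨integrable_exp_neg_norm_sq_mul_rpow_mul_monomial m n hm p hp μ, ?_⟩
  have : Nonempty (Fin m) := ⟨⟨0, hm⟩⟩
  have hm0 : (0 : ℝ) < m := by exact_mod_cast hm
  have polar (q : ℝ) (hq : q < (n : ℝ) + (m : ℝ) / 2) :
      ∫ ξ : EuclideanSpace ℝ (Fin m),
        Real.exp (-‖ξ‖ ^ 2) * ‖ξ‖ ^ (-(2 * q)) * ∏ j : Fin (2 * n), ξ (μ j)
      = (∫ x : Metric.sphere (0 : EuclideanSpace ℝ (Fin m)) 1,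
          ∏ j : Fin (2 * n), x.1 (μ j) ∂volume.toSphere)
        * (1 / 2 * Real.Gamma ((m : ℝ) / 2 + n - q)) := by
    rw [integral_radial_mul_homogeneous volume (2 * n)
      (fun r => Real.exp (-r ^ 2) * r ^ (-(2 * q)))
      (fun ξ : EuclideanSpace ℝ (Fin m) => ∏ j : Fin (2 * n), ξ (μ j))
      (fun r x => by simp [Finset.prod_mul_distrib])]
    rw [finrank_euclideanSpace_fin, integral_radial m n hm q hq]
  have hzero := polar 0 (by positivity)
  simp only [mul_zero, neg_zero, Real.rpow_zero, mul_one, sub_zero] at hzero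
  rw [integral_exp_neg_norm_sq_mul_monomial m n hm μ] at hzero
  simp only [fun j : Fin n => consecutivePairs_zero j (by omega),
    fun j : Fin n => consecutivePairs_one j (by omega)] at hzero
  have hGamma : Real.Gamma ((m : ℝ) / 2 + n) ≠ 0 := (Real.Gamma_pos_of_pos (by positivity)).ne'
  rw [polar p hp, mul_right_comm (Real.pi ^ _) (_ / _), mul_right_comm _ (_ / _), hzero]
  field_simp

end NLT
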